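/- Let 1 ≤ p < ∞ and let {X_n}_{n=1}^∞ be a nested family of finite-dimensional Banach spaces (X_n is a proper linear subspace of X_{n+1}, with the induced norm, for every n). Let X = (⊕_{n=1}^∞ X_n)_p be their ℓ_p-sum. Then for every ε > 0 and every C ≥ 1, if A is a locally finite metric space all of whose finite subsets admit C-bilipschitz embeddings into X, then A admits a ((1+ε)·C)-bilipschitz embedding into X. -/

import Mathlib

open scoped ENNReal

/-- A metric space is locally finite if every closed ball of finite radius is finite. -/
def MetricLocallyFinite (A : Type*) [MetricSpace A] : Prop :=
  ∀ (x : A) (R : ℝ), (Metric.closedBall x R).Finite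

/-- `f` is a `C`-bilipschitz embedding: there is `r > 0` with
`r * d(u,v) ≤ d(f u, f v) ≤ r * C * d(u,v)` for all `u, v`. -/
def IsBilipschitzEmbedding {A Y : Type*} [MetricSpace A] [MetricSpace Y]
    (C : ℝ) (f : A → Y) : Prop :=
  ∃ r : ℝ, 0 < r ∧ ∀ u v : A,
    r * dist u v ≤ dist (f u) (f v) ∧ dist (f u) (f v) ≤ r * C * dist u v

/-! Every ball around a point `O` is finite, so it embeds in `X`; the embeddings of larger and
larger balls are glued coordinatewise in `ℓ_p(X)`, weighted by a Lipschitz curve in the unit sphere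
of `ℓ_p` with parameter `δ log (1 + d(x, O))`. Because the weights have norm one, the distortion
is preserved, up to an error coming from the variation of the weights; the logarithm makes this
error at most a multiple of `δ d(x, y)`. Finally `ℓ_p(X)` embeds isometrically in `X`, since every
summand `X_k` sits isometrically in all later ones and `ℕ × ℕ` can be enumerated so that the pair
`(i, k)` gets an index at least `k`. -/

open scoped lp

section LpSums

variable {ι κ ν : Type*} {p : ℝ≥0∞}

theorem lp_norm_le_sum_of_eq_zero_off [Fact (1 ≤ p)] {E : ι → Type*}
    [∀ i, NormedAddCommGroup (E i)] (x : lp E p) (s : Finset ι) (hs : ∀ i ∉ s, x i = 0) :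
    ‖x‖ ≤ ∑ i ∈ s, ‖x i‖ := by
  classical
  have hp : 0 < p := zero_lt_one.trans_le Fact.out
  have hx : x = ∑ i ∈ s, lp.single p i (x i) := by
    ext i
    rw [lp.coeFn_sum, Finset.sum_apply]
    by_cases hi : i ∈ s <;> simp [lp.single_apply, hi, hs]
  calc ‖x‖ = ‖∑ i ∈ s, lp.single p i (x i)‖ := congrArg _ hx
    _ ≤ ∑ i ∈ s, ‖lp.single p i (x i)‖ := norm_sum_le _ _
    _ = ∑ i ∈ s, ‖x i‖ := by simp only [lp.norm_single hp]

section PointwiseSMul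

variable {E : ι → Type*} [∀ i, NormedAddCommGroup (E i)] [∀ i, NormedSpace ℝ (E i)]

/-- The product `(uᵢ • xᵢ)ᵢ ∈ ℓ_p` of a scalar sequence `u ∈ ℓ_p` and a bounded sequence of
vectors `x`, as a bilinear map. It is used to glue a family of maps. -/
noncomputable def lpSMul : ℓ^p(ι, ℝ) →ₗ[ℝ] lp E ∞ →ₗ[ℝ] lp E p :=
  lp.holderₗ p (fun _ => ContinuousLinearMap.lsmul ℝ ℝ)
    fun _ => ContinuousLinearMap.opNorm_lsmul_le

theorem lpSMul_apply (u : ℓ^p(ι, ℝ)) (x : lp E ∞) (i : ι) : lpSMul u x i = u i • x i :=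
  rfl

theorem norm_lpSMul_le (hp : p ≠ 0) {u : ℓ^p(ι, ℝ)} {x : lp E ∞} {c : ℝ} (hc : 0 ≤ c)
    (h : ∀ i, u i ≠ 0 → ‖x i‖ ≤ c) : ‖lpSMul u x‖ ≤ c * ‖u‖ := by
  rw [← Real.norm_of_nonneg hc, ← lp.norm_const_smul hp]
  refine lp.norm_mono hp fun i => ?_
  simp only [lpSMul_apply, lp.coeFn_smul, Pi.smul_apply, norm_smul, Real.norm_of_nonneg hc]
  rw [mul_comm]
  rcases eq_or_ne (u i) 0 with hu | hu
  · simp only [hu, norm_zero, mul_zero, le_refl]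
  · exact mul_le_mul_of_nonneg_right (h i hu) (norm_nonneg _)

theorem le_norm_lpSMul (hp : p ≠ 0) {u : ℓ^p(ι, ℝ)} {x : lp E ∞} {c : ℝ} (hc : 0 ≤ c)
    (h : ∀ i, u i ≠ 0 → c ≤ ‖x i‖) : c * ‖u‖ ≤ ‖lpSMul u x‖ := by
  rw [← Real.norm_of_nonneg hc, ← lp.norm_const_smul hp]
  refine lp.norm_mono hp fun i => ?_
  simp only [lpSMul_apply, lp.coeFn_smul, Pi.smul_apply, norm_smul, Real.norm_of_nonneg hc]
  rw [mul_comm]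
  rcases eq_or_ne (u i) 0 with hu | hu
  · simp only [hu, norm_zero, zero_mul, le_refl]
  · exact mul_le_mul_of_nonneg_left (h i hu) (norm_nonneg _)

end PointwiseSMul

section Uncurry

variable {X : ι → κ → Type*} [∀ i k, NormedAddCommGroup (X i k)]
  {Y : ν → Type*} [∀ m, NormedAddCommGroup (Y m)]

theorem lp_hasSum_norm_uncurry [Fact (1 ≤ p)] (hp : 0 < p.toReal)
    (z : lp (fun i => lp (X i) p) p) :
    HasSum (fun a : ι × κ => ‖z a.1 a.2‖ ^ p.toReal) (‖z‖ ^ p.toReal) := by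
  have inner (i : ι) : HasSum (fun k => ‖z i k‖ ^ p.toReal) (‖z i‖ ^ p.toReal) :=
    lp.hasSum_norm hp (z i)
  have outer : HasSum (fun i => ‖z i‖ ^ p.toReal) (‖z‖ ^ p.toReal) := lp.hasSum_norm hp z
  have summable : Summable fun a : ι × κ => ‖z a.1 a.2‖ ^ p.toReal := by
    rw [summable_prod_of_nonneg fun _ => by positivity]
    refine ⟨fun i => (inner i).summable, ?_⟩
    simpa only [(inner _).tsum_eq] using outer.summable
  rw [← (summable.hasSum.prod_fiberwise inner).unique outer]
  exact summable.hasSum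

theorem memℓp_of_norm_eq_uncurry [Fact (1 ≤ p)] (e : ν ≃ ι × κ) (z : lp (fun i => lp (X i) p) p)
    {y : ∀ m, Y m} (hy : ∀ m, ‖y m‖ = ‖z (e m).1 (e m).2‖) : Memℓp y p := by
  rcases p.dichotomy with rfl | hp
  · refine memℓp_infty ⟨‖z‖, ?_⟩
    rintro _ ⟨m, rfl⟩
    exact (hy m).trans_le <| (lp.norm_apply_le_norm ENNReal.top_ne_zero _ _).trans
      (lp.norm_apply_le_norm ENNReal.top_ne_zero _ _)
  · have hp : 0 < p.toReal := zero_lt_one.trans_le hp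
    refine memℓp_gen ?_
    simpa only [hy, Function.comp_def] using
      e.summable_iff.2 (lp_hasSum_norm_uncurry hp z).summable

theorem lp_norm_eq_of_norm_eq_uncurry [Fact (1 ≤ p)] (e : ν ≃ ι × κ)
    (z : lp (fun i => lp (X i) p) p) (y : lp Y p) (hy : ∀ m, ‖y m‖ = ‖z (e m).1 (e m).2‖) :
    ‖y‖ = ‖z‖ := by
  rcases p.dichotomy with rfl | hp
  · refine le_antisymm (lp.norm_le_of_forall_le (norm_nonneg _) fun m => ?_)
      (lp.norm_le_of_forall_le (norm_nonneg _) fun i =>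
        lp.norm_le_of_forall_le (norm_nonneg _) fun k => ?_)
    · rw [hy m]
      exact (lp.norm_apply_le_norm ENNReal.top_ne_zero _ _).trans
        (lp.norm_apply_le_norm ENNReal.top_ne_zero _ _)
    · have hik := hy (e.symm (i, k))
      rw [e.apply_symm_apply] at hik
      exact hik.symm.trans_le (lp.norm_apply_le_norm ENNReal.top_ne_zero _ _)
  · have hp : 0 < p.toReal := zero_lt_one.trans_le hp
    have hsum := e.hasSum_iff.2 (lp_hasSum_norm_uncurry hp z)
    have hpow : ‖y‖ ^ p.toReal = ‖z‖ ^ p.toReal := by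
      refine (lp.hasSum_norm hp y).unique ?_
      simpa only [hy, Function.comp_def] using hsum
    exact (Real.rpow_left_inj (norm_nonneg _) (norm_nonneg _) hp.ne').1 hpow

variable {𝕜 : Type*} [NormedField 𝕜] [∀ i k, NormedSpace 𝕜 (X i k)] [∀ m, NormedSpace 𝕜 (Y m)]

/-- The isometry `z ↦ (K_m z_{e(m)})_m` from the iterated sum `(⊕_i (⊕_k X_{i,k})_p)_p` into
`(⊕_m Y_m)_p` given by a relabelling `e` of the double index and isometries `K_m` of the
summands. -/
def lpUncurry [Fact (1 ≤ p)] (e : ν ≃ ι × κ) (K : ∀ m, X (e m).1 (e m).2 →ₗᵢ[𝕜] Y m) :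
    lp (fun i => lp (X i) p) p →ₗᵢ[𝕜] lp Y p where
  toFun z := ⟨fun m => K m (z (e m).1 (e m).2),
    memℓp_of_norm_eq_uncurry e z fun m => (K m).norm_map _⟩
  map_add' _ _ := lp.ext <| funext fun m => (K m).map_add _ _
  map_smul' c _ := lp.ext <| funext fun m => (K m).map_smul c _
  norm_map' z := lp_norm_eq_of_norm_eq_uncurry e z _ fun m => (K m).norm_map _

end Uncurry

end LpSums

section Nested

variable {𝕜 : Type*} [NormedField 𝕜] {X : ℕ → Type*} [∀ n, NormedAddCommGroup (X n)]
  [∀ n, NormedSpace 𝕜 (X n)]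

theorem nonempty_linearIsometry_of_le (h : ∀ n, Nonempty (X n →ₗᵢ[𝕜] X (n + 1))) {k m : ℕ}
    (hkm : k ≤ m) : Nonempty (X k →ₗᵢ[𝕜] X m) := by
  induction m, hkm using Nat.le_induction with
  | base => exact ⟨LinearIsometry.id⟩
  | succ m _ ih => exact ⟨(h m).some.comp ih.some⟩

/- The summand `X k` of the `i`-th copy is sent into `X ⟨i, k⟩`, where `⟨i, k⟩ ≥ k` is the Cantor
pairing. -/
theorem nonempty_linearIsometry_lp_lp (p : ℝ≥0∞) [Fact (1 ≤ p)]
    (h : ∀ n, Nonempty (X n →ₗᵢ[𝕜] X (n + 1))) :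
    Nonempty (ℓ^p(ℕ, lp X p) →ₗᵢ[𝕜] lp X p) :=
  ⟨lpUncurry Nat.pairEquiv.symm fun m =>
    (nonempty_linearIsometry_of_le h (Nat.unpair_right_le m)).some⟩

end Nested

section UnitCurve

theorem norm_mul_norm_normalize_sub_normalize_le {V : Type*} [NormedAddCommGroup V]
    [NormedSpace ℝ V] (x y : V) :
    ‖x‖ * ‖NormedSpace.normalize x - NormedSpace.normalize y‖ ≤ 2 * ‖x - y‖ := by
  have hy : ‖NormedSpace.normalize y‖ ≤ 1 := by
    rcases eq_or_ne y 0 with rfl | hy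
    · simp only [NormedSpace.normalize_zero_eq_zero, norm_zero, zero_le_one]
    · exact (NormedSpace.norm_normalize hy).le
  calc ‖x‖ * ‖NormedSpace.normalize x - NormedSpace.normalize y‖
      = ‖‖x‖ • (NormedSpace.normalize x - NormedSpace.normalize y)‖ := by
        rw [norm_smul, norm_norm]
    _ = ‖(x - y) + (‖y‖ - ‖x‖) • NormedSpace.normalize y‖ := by
        rw [smul_sub, sub_smul, NormedSpace.norm_smul_normalize, NormedSpace.norm_smul_normalize]
        congr 1
        abel
    _ ≤ ‖x - y‖ + |‖y‖ - ‖x‖| * ‖NormedSpace.normalize y‖ :=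
        (norm_add_le _ _).trans_eq (by rw [norm_smul, Real.norm_eq_abs])
    _ ≤ ‖x - y‖ + ‖x - y‖ * 1 := by
        gcongr
        rw [norm_sub_rev]
        exact abs_norm_sub_norm_le y x
    _ = 2 * ‖x - y‖ := by ring

/-- The piecewise linear bump of height `1` supported on `[i - 1, i + 1]`. -/
def tent (i : ℕ) (t : ℝ) : ℝ := max 0 (1 - |t - i|)

theorem tent_eq_zero_of_one_le {i : ℕ} {t : ℝ} (h : 1 ≤ |t - i|) : tent i t = 0 :=
  max_eq_left (sub_nonpos.2 h)

theorem tent_eq_zero_of_notMem {i : ℕ} {t : ℝ} (hi : i ∉ ({⌊t⌋₊, ⌊t⌋₊ + 1} : Finset ℕ)) :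
    tent i t = 0 := by
  simp only [Finset.mem_insert, Finset.mem_singleton, not_or] at hi
  refine tent_eq_zero_of_one_le ?_
  rcases lt_or_gt_of_ne hi.1 with hlt | hgt
  · have hi1 : ((i + 1 : ℕ) : ℝ) ≤ t := (Nat.le_floor_iff' i.succ_ne_zero).1 hlt
    push_cast at hi1
    exact (by linarith : 1 ≤ t - i).trans (le_abs_self _)
  · have hi2 : ((⌊t⌋₊ + 2 : ℕ) : ℝ) ≤ i := by exact_mod_cast (by omega : ⌊t⌋₊ + 2 ≤ i)
    push_cast at hi2
    have ht := Nat.lt_floor_add_one t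
    exact (by linarith : 1 ≤ -(t - i)).trans (neg_le_abs _)

theorem abs_tent_sub_tent_le (i : ℕ) (s t : ℝ) : |tent i s - tent i t| ≤ |s - t| := by
  calc |tent i s - tent i t| ≤ max |(0 : ℝ) - 0| |1 - |s - i| - (1 - |t - i|)| :=
        abs_max_sub_max_le_max _ _ _ _
    _ = |(|t - i| - |s - i|)| := by rw [sub_self, abs_zero, max_eq_right (abs_nonneg _)]; ring_nf
    _ ≤ |t - i - (s - i)| := abs_abs_sub_abs_le_abs_sub _ _
    _ = |s - t| := by rw [abs_sub_comm]; ring_nf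

variable (p : ℝ≥0∞)

theorem memℓp_tent (t : ℝ) : Memℓp (fun i => tent i t) p :=
  (memℓp_zero <| (Finset.finite_toSet {⌊t⌋₊, ⌊t⌋₊ + 1}).subset fun _ hi =>
    not_not.1 (mt tent_eq_zero_of_notMem hi)).of_exponent_ge zero_le

/-- The sequence `(tent i t)ᵢ`, a curve in `ℓ_p` parametrized by `t`. -/
def tentSeq (t : ℝ) : ℓ^p(ℕ, ℝ) := ⟨fun i => tent i t, memℓp_tent p t⟩

variable [Fact (1 ≤ p)]

/-- The radial projection of the curve `tentSeq` to the unit sphere of `ℓ_p`. -/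
noncomputable def unitTentSeq (t : ℝ) : ℓ^p(ℕ, ℝ) := NormedSpace.normalize (tentSeq p t)

theorem half_le_norm_tentSeq {t : ℝ} (ht : 0 ≤ t) : 1 / 2 ≤ ‖tentSeq p t‖ := by
  have hp : p ≠ 0 := (zero_lt_one.trans_le Fact.out).ne'
  set j := ⌊t + 1 / 2⌋₊
  have hj_le : (j : ℝ) ≤ t + 1 / 2 := Nat.floor_le (by linarith)
  have hj_gt : t + 1 / 2 < j + 1 := Nat.lt_floor_add_one _
  have hj_near : |t - j| ≤ 1 / 2 := abs_le.2 ⟨by linarith, by linarith⟩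
  calc (1 / 2 : ℝ) ≤ 1 - |t - j| := by linarith
    _ ≤ tentSeq p t j := le_max_right _ _
    _ ≤ ‖tentSeq p t j‖ := le_abs_self _
    _ ≤ ‖tentSeq p t‖ := lp.norm_apply_le_norm hp _ _

/- At most four coordinates of the difference are nonzero, and each of them is `1`-Lipschitz. -/
theorem norm_tentSeq_sub_le (s t : ℝ) : ‖tentSeq p s - tentSeq p t‖ ≤ 4 * |s - t| := by
  let I : Finset ℕ := {⌊s⌋₊, ⌊s⌋₊ + 1} ∪ {⌊t⌋₊, ⌊t⌋₊ + 1}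
  have hI_card : (I.card : ℝ) ≤ 4 := by
    exact_mod_cast (Finset.card_union_le _ _).trans
      (add_le_add Finset.card_le_two Finset.card_le_two)
  have hI_off (i : ℕ) (hi : i ∉ I) : (tentSeq p s - tentSeq p t) i = 0 := by
    obtain ⟨his, hit⟩ := not_or.1 (mt Finset.mem_union.2 hi)
    exact sub_eq_zero.2
      ((tent_eq_zero_of_notMem his).trans (tent_eq_zero_of_notMem hit).symm)
  calc ‖tentSeq p s - tentSeq p t‖ ≤ ∑ i ∈ I, ‖(tentSeq p s - tentSeq p t) i‖ :=
        lp_norm_le_sum_of_eq_zero_off _ I hI_off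
    _ ≤ ∑ _i ∈ I, |s - t| := Finset.sum_le_sum fun i _ => abs_tent_sub_tent_le i s t
    _ = I.card * |s - t| := by rw [Finset.sum_const, nsmul_eq_mul]
    _ ≤ 4 * |s - t| := mul_le_mul_of_nonneg_right hI_card (abs_nonneg _)

theorem norm_unitTentSeq {t : ℝ} (ht : 0 ≤ t) : ‖unitTentSeq p t‖ = 1 :=
  NormedSpace.norm_normalize <| norm_pos_iff.1 <|
    one_half_pos.trans_le (half_le_norm_tentSeq p ht)

theorem norm_unitTentSeq_sub_le {s : ℝ} (hs : 0 ≤ s) (t : ℝ) :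
    ‖unitTentSeq p s - unitTentSeq p t‖ ≤ 16 * |s - t| := by
  have hhalf : 1 / 2 * ‖unitTentSeq p s - unitTentSeq p t‖ ≤ 2 * (4 * |s - t|) :=
    calc 1 / 2 * ‖unitTentSeq p s - unitTentSeq p t‖
        ≤ ‖tentSeq p s‖ * ‖unitTentSeq p s - unitTentSeq p t‖ :=
          mul_le_mul_of_nonneg_right (half_le_norm_tentSeq p hs) (norm_nonneg _)
      _ ≤ 2 * ‖tentSeq p s - tentSeq p t‖ := norm_mul_norm_normalize_sub_normalize_le _ _
      _ ≤ 2 * (4 * |s - t|) :=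
          mul_le_mul_of_nonneg_left (norm_tentSeq_sub_le p s t) zero_le_two
  linarith

variable {p}

theorem le_add_one_of_unitTentSeq_apply_ne_zero {t : ℝ} {i : ℕ} (h : unitTentSeq p t i ≠ 0) :
    t ≤ i + 1 := by
  by_contra! hit
  have htent : tentSeq p t i = 0 :=
    tent_eq_zero_of_one_le <| (by linarith : 1 ≤ t - i).trans (le_abs_self _)
  refine h ?_
  rw [unitTentSeq, NormedSpace.normalize, lp.coeFn_smul, Pi.smul_apply, htent, smul_zero]

end UnitCurve

section Gluing

theorem log_one_add_sub_log_one_add_mul_le {a b : ℝ} (hb : 0 ≤ b) (hab : b ≤ a) :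
    (Real.log (1 + a) - Real.log (1 + b)) * b ≤ a - b := by
  have hb1 : 0 < 1 + b := by linarith
  have hlog : Real.log (1 + a) - Real.log (1 + b) ≤ (a - b) / (1 + b) :=
    calc Real.log (1 + a) - Real.log (1 + b) = Real.log ((1 + a) / (1 + b)) :=
          (Real.log_div (by linarith) hb1.ne').symm
      _ ≤ (1 + a) / (1 + b) - 1 := Real.log_le_sub_one_of_pos (div_pos (by linarith) hb1)
      _ = (a - b) / (1 + b) := by field_simp; ring
  calc (Real.log (1 + a) - Real.log (1 + b)) * b ≤ (a - b) / (1 + b) * b :=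
        mul_le_mul_of_nonneg_right hlog hb
    _ ≤ (a - b) / (1 + b) * (1 + b) :=
        mul_le_mul_of_nonneg_left (by linarith) (div_nonneg (sub_nonneg.2 hab) hb1.le)
    _ = a - b := div_mul_cancel₀ _ hb1.ne'

variable {A : Type*} [PseudoMetricSpace A]

/-- The slowly varying parameter `δ log (1 + d(x, O))` along which maps defined on larger and
larger balls around `O` are glued. -/
noncomputable def logRadius (δ : ℝ) (O x : A) : ℝ := δ * Real.log (1 + dist x O)

theorem logRadius_nonneg {δ : ℝ} (hδ : 0 ≤ δ) (O x : A) : 0 ≤ logRadius δ O x :=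
  mul_nonneg hδ (Real.log_nonneg (le_add_of_nonneg_right dist_nonneg))

theorem logRadius_le_logRadius {δ : ℝ} (hδ : 0 ≤ δ) {O x y : A} (h : dist y O ≤ dist x O) :
    logRadius δ O y ≤ logRadius δ O x :=
  mul_le_mul_of_nonneg_left (Real.log_le_log (by positivity) (by linarith)) hδ

theorem abs_logRadius_sub_mul_dist_le {δ : ℝ} (hδ : 0 ≤ δ) {O x y : A}
    (h : dist y O ≤ dist x O) :
    |logRadius δ O x - logRadius δ O y| * dist y O ≤ δ * dist x y :=
  calc |logRadius δ O x - logRadius δ O y| * dist y O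
      = δ * ((Real.log (1 + dist x O) - Real.log (1 + dist y O)) * dist y O) := by
        rw [abs_of_nonneg (sub_nonneg.2 (logRadius_le_logRadius hδ h)), logRadius, logRadius]
        ring
    _ ≤ δ * (dist x O - dist y O) :=
        mul_le_mul_of_nonneg_left (log_one_add_sub_log_one_add_mul_le dist_nonneg h) hδ
    _ ≤ δ * dist x y :=
        mul_le_mul_of_nonneg_left (sub_le_iff_le_add.2 (dist_triangle x y O)) hδ

theorem dist_le_exp_of_logRadius_le {δ R : ℝ} (hδ : 0 < δ) {O x : A}
    (h : logRadius δ O x ≤ R) : dist x O ≤ Real.exp (R / δ) := by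
  have hlog : Real.log (1 + dist x O) ≤ R / δ := (le_div_iff₀' hδ).2 h
  have hexp := (Real.log_le_iff_le_exp (by positivity)).1 hlog
  linarith

variable {E : Type*} [NormedAddCommGroup E] [NormedSpace ℝ E]

/-- The gluing `x ↦ (uᵢ(ρ(x)) Fᵢ(x))ᵢ` of the maps `Fᵢ = fun x => F x i`, with `u` the curve
`unitTentSeq` and `ρ` the function `logRadius`. -/
noncomputable def logGlue (p : ℝ≥0∞) [Fact (1 ≤ p)] (δ : ℝ) (O : A) (F : A → ℓ^∞(ℕ, E)) (x : A) :
    ℓ^p(ℕ, E) :=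
  lpSMul (unitTentSeq p (logRadius δ O x)) (F x)

variable (p : ℝ≥0∞) [Fact (1 ≤ p)] {δ C : ℝ} {O : A} {F : A → ℓ^∞(ℕ, E)}

/- The larger radius goes with `F x - F y` in the splitting `u • F x - v • F y =
u • (F x - F y) + (u - v) • F y`, so that both points lie in the ball of every `F i` with
`u i ≠ 0`; the smaller radius bounds `F y` in the error term. -/
theorem logGlue_bounds_of_dist_le (hδ : 0 ≤ δ) (hC : 0 ≤ C)
    (hF_norm : ∀ i x, ‖F x i‖ ≤ C * dist x O)
    (hF_dist : ∀ (i : ℕ) (x y : A), logRadius δ O x ≤ i + 1 → logRadius δ O y ≤ i + 1 →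
      dist x y ≤ dist (F x i) (F y i) ∧ dist (F x i) (F y i) ≤ C * dist x y)
    {x y : A} (hyx : dist y O ≤ dist x O) :
    (1 - 16 * C * δ) * dist x y ≤ dist (logGlue p δ O F x) (logGlue p δ O F y) ∧
      dist (logGlue p δ O F x) (logGlue p δ O F y) ≤ (1 + 16 * δ) * C * dist x y := by
  have hp : p ≠ 0 := (zero_lt_one.trans_le Fact.out).ne'
  set u := unitTentSeq p (logRadius δ O x)
  set v := unitTentSeq p (logRadius δ O y)
  have hu : ‖u‖ = 1 := norm_unitTentSeq p (logRadius_nonneg hδ O x)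
  have hactive (i : ℕ) (hi : u i ≠ 0) :
      dist x y ≤ ‖(F x - F y) i‖ ∧ ‖(F x - F y) i‖ ≤ C * dist x y := by
    have hxi := le_add_one_of_unitTentSeq_apply_ne_zero hi
    rw [lp.coeFn_sub, Pi.sub_apply, ← dist_eq_norm]
    exact hF_dist i x y hxi ((logRadius_le_logRadius hδ hyx).trans hxi)
  have hmain_lower : dist x y ≤ ‖lpSMul u (F x - F y)‖ := by
    simpa only [hu, mul_one] using le_norm_lpSMul hp dist_nonneg fun i hi => (hactive i hi).1
  have hmain_upper : ‖lpSMul u (F x - F y)‖ ≤ C * dist x y := by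
    simpa only [hu, mul_one] using
      norm_lpSMul_le hp (mul_nonneg hC dist_nonneg) fun i hi => (hactive i hi).2
  have herror : ‖lpSMul (u - v) (F y)‖ ≤ 16 * C * δ * dist x y :=
    calc ‖lpSMul (u - v) (F y)‖ ≤ C * dist y O * ‖u - v‖ :=
          norm_lpSMul_le hp (mul_nonneg hC dist_nonneg) fun i _ => hF_norm i y
      _ ≤ C * dist y O * (16 * |logRadius δ O x - logRadius δ O y|) :=
          mul_le_mul_of_nonneg_left
            (norm_unitTentSeq_sub_le p (logRadius_nonneg hδ O x) _) (by positivity)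
      _ = 16 * C * (|logRadius δ O x - logRadius δ O y| * dist y O) := by ring
      _ ≤ 16 * C * (δ * dist x y) :=
          mul_le_mul_of_nonneg_left (abs_logRadius_sub_mul_dist_le hδ hyx) (by positivity)
      _ = 16 * C * δ * dist x y := by ring
  have hsplit : logGlue p δ O F x - logGlue p δ O F y
      = lpSMul u (F x - F y) + lpSMul (u - v) (F y) := by
    simp only [logGlue, map_sub, LinearMap.sub_apply, sub_add_sub_cancel, u, v]
  have hlower := norm_sub_le_norm_add (lpSMul u (F x - F y)) (lpSMul (u - v) (F y))
  have hupper := norm_add_le (lpSMul u (F x - F y)) (lpSMul (u - v) (F y))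
  rw [dist_eq_norm, hsplit]
  constructor <;> linarith

theorem logGlue_bounds (hδ : 0 ≤ δ) (hC : 0 ≤ C) (hF_norm : ∀ i x, ‖F x i‖ ≤ C * dist x O)
    (hF_dist : ∀ (i : ℕ) (x y : A), logRadius δ O x ≤ i + 1 → logRadius δ O y ≤ i + 1 →
      dist x y ≤ dist (F x i) (F y i) ∧ dist (F x i) (F y i) ≤ C * dist x y) (x y : A) :
    (1 - 16 * C * δ) * dist x y ≤ dist (logGlue p δ O F x) (logGlue p δ O F y) ∧
      dist (logGlue p δ O F x) (logGlue p δ O F y) ≤ (1 + 16 * δ) * C * dist x y := by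
  rcases le_total (dist y O) (dist x O) with hyx | hxy
  · exact logGlue_bounds_of_dist_le p hδ hC hF_norm hF_dist hyx
  · rw [dist_comm x y, dist_comm (logGlue p δ O F x)]
    exact logGlue_bounds_of_dist_le p hδ hC hF_norm hF_dist hxy

end Gluing

section FiniteDetermination

variable {A : Type*} [MetricSpace A] {E : Type*} [NormedAddCommGroup E]

theorem IsBilipschitzEmbedding.isometry_comp {Y Z : Type*} [MetricSpace Y] [MetricSpace Z] {C : ℝ}
    {f : A → Y} (hf : IsBilipschitzEmbedding C f) {g : Y → Z} (hg : Isometry g) :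
    IsBilipschitzEmbedding C (g ∘ f) := by
  simpa only [IsBilipschitzEmbedding, Function.comp_apply, hg.dist_eq] using hf

variable [NormedSpace ℝ E]

/- Normalize to scale `1` and value `0` at `O`, and extend by `0` outside `S`. -/
theorem IsBilipschitzEmbedding.exists_normalized_extension {C : ℝ} (hC : 0 ≤ C) {S : Set A} {O : A}
    (hO : O ∈ S) {f : S → E} (hf : IsBilipschitzEmbedding C f) :
    ∃ F : A → E, (∀ x, ‖F x‖ ≤ C * dist x O) ∧ ∀ x ∈ S, ∀ y ∈ S,
      dist x y ≤ dist (F x) (F y) ∧ dist (F x) (F y) ≤ C * dist x y := by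
  classical
  obtain ⟨r, hr, hf⟩ := hf
  let F (x : A) : E := if hx : x ∈ S then r⁻¹ • (f ⟨x, hx⟩ - f ⟨O, hO⟩) else 0
  have hF_dist (x : A) (hx : x ∈ S) (y : A) (hy : y ∈ S) :
      dist x y ≤ dist (F x) (F y) ∧ dist (F x) (F y) ≤ C * dist x y := by
    have hFxy : dist (F x) (F y) = r⁻¹ * dist (f ⟨x, hx⟩) (f ⟨y, hy⟩) := by
      simp only [F, dif_pos hx, dif_pos hy, dist_smul₀, dist_sub_right, norm_inv,
        Real.norm_of_nonneg hr.le]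
    rw [hFxy, le_inv_mul_iff₀ hr, inv_mul_le_iff₀ hr, ← mul_assoc]
    exact hf ⟨x, hx⟩ ⟨y, hy⟩
  have hFO : F O = 0 := by simp only [F, dif_pos hO, sub_self, smul_zero]
  refine ⟨F, fun x => ?_, hF_dist⟩
  by_cases hx : x ∈ S
  · simpa only [hFO, dist_zero_right] using (hF_dist x hx O hO).2
  · simpa only [F, dif_neg hx, norm_zero] using mul_nonneg hC dist_nonneg

theorem exists_bounded_family_of_finite {C : ℝ} (hC : 0 ≤ C) (hA : MetricLocallyFinite A)
    (hfin : ∀ S : Set A, S.Finite → ∃ f : S → E, IsBilipschitzEmbedding C f) (O : A)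
    {R : ℕ → ℝ} (hR : ∀ i, 0 ≤ R i) :
    ∃ F : A → ℓ^∞(ℕ, E), (∀ i x, ‖F x i‖ ≤ C * dist x O) ∧
      ∀ i, ∀ x ∈ Metric.closedBall O (R i), ∀ y ∈ Metric.closedBall O (R i),
        dist x y ≤ dist (F x i) (F y i) ∧ dist (F x i) (F y i) ≤ C * dist x y := by
  have hball (i : ℕ) : ∃ F : A → E, (∀ x, ‖F x‖ ≤ C * dist x O) ∧
      ∀ x ∈ Metric.closedBall O (R i), ∀ y ∈ Metric.closedBall O (R i),
        dist x y ≤ dist (F x) (F y) ∧ dist (F x) (F y) ≤ C * dist x y := by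
    obtain ⟨f, hf⟩ := hfin _ (hA O (R i))
    exact hf.exists_normalized_extension hC (Metric.mem_closedBall_self (hR i))
  choose F hF_norm hF_dist using hball
  have hF_mem (x : A) : Memℓp (fun i => F i x) ∞ :=
    memℓp_infty ⟨C * dist x O, Set.forall_mem_range.2 fun i => hF_norm i x⟩
  exact ⟨fun x => ⟨fun i => F i x, hF_mem x⟩, hF_norm, hF_dist⟩

theorem exists_distortion_parameter {ε C : ℝ} (hε : 0 < ε) (hC : 0 ≤ C) :
    ∃ η : ℝ, 0 < η ∧ 0 < 1 - C * η ∧ 1 + η ≤ (1 - C * η) * (1 + ε) := by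
  have hpos : 0 < 1 + C * (1 + ε) := by positivity
  set η := ε / (1 + C * (1 + ε))
  have hη : 0 < η := div_pos hε hpos
  have hη_mul : η * (1 + C * (1 + ε)) = ε := div_mul_cancel₀ _ hpos.ne'
  have hbound : 1 + η ≤ (1 - C * η) * (1 + ε) := by linarith
  have hmul_pos : 0 < (1 - C * η) * (1 + ε) := by linarith
  exact ⟨η, hη, pos_of_mul_pos_left hmul_pos (by linarith), hbound⟩

theorem exists_isBilipschitzEmbedding_lp_of_finite (p : ℝ≥0∞) [Fact (1 ≤ p)] {ε C : ℝ}
    (hε : 0 < ε) (hC : 0 ≤ C) (hA : MetricLocallyFinite A)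
    (hfin : ∀ S : Set A, S.Finite → ∃ f : S → E, IsBilipschitzEmbedding C f) :
    ∃ f : A → ℓ^p(ℕ, E), IsBilipschitzEmbedding ((1 + ε) * C) f := by
  rcases isEmpty_or_nonempty A with hempty | ⟨⟨O⟩⟩
  · exact ⟨isEmptyElim, 1, one_pos, isEmptyElim⟩
  obtain ⟨η, hη, hscale, hratio⟩ := exists_distortion_parameter hε hC
  have hδ : 0 < η / 16 := by positivity
  obtain ⟨F, hF_norm, hF_dist⟩ := exists_bounded_family_of_finite hC hA hfin O
    (R := fun i => Real.exp ((i + 1) / (η / 16))) fun i => (Real.exp_pos _).le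
  have hbounds := logGlue_bounds p hδ.le hC hF_norm fun i x y hx hy =>
    hF_dist i x (dist_le_exp_of_logRadius_le hδ hx) y (dist_le_exp_of_logRadius_le hδ hy)
  rw [show 16 * C * (η / 16) = C * η by ring, show 16 * (η / 16) = η by ring] at hbounds
  refine ⟨logGlue p (η / 16) O F, 1 - C * η, hscale, fun x y => ⟨(hbounds x y).1, ?_⟩⟩
  calc dist (logGlue p (η / 16) O F x) (logGlue p (η / 16) O F y)
      ≤ (1 + η) * C * dist x y := (hbounds x y).2
    _ ≤ (1 - C * η) * (1 + ε) * C * dist x y := by gcongr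
    _ = (1 - C * η) * ((1 + ε) * C) * dist x y := by ring

end FiniteDetermination

theorem lp_sum_of_nested_finite_dimensional_finite_determination_general
    (p : ℝ≥0∞) [Fact (1 ≤ p)]
    (X : ℕ → Type*) [∀ n, NormedAddCommGroup (X n)] [∀ n, NormedSpace ℝ (X n)]
    (hnested : ∀ n, Nonempty (X n →ₗᵢ[ℝ] X (n + 1)))
    (ε C : ℝ) (hε : 0 < ε) (hC : 0 ≤ C)
    (A : Type*) [MetricSpace A] (hA : MetricLocallyFinite A)
    (hfin : ∀ S : Set A, S.Finite → ∃ f : S → lp X p, IsBilipschitzEmbedding C f) :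
    ∃ f : A → lp X p, IsBilipschitzEmbedding ((1 + ε) * C) f := by
  obtain ⟨Φ⟩ := nonempty_linearIsometry_lp_lp p hnested
  obtain ⟨f, hf⟩ := exists_isBilipschitzEmbedding_lp_of_finite p hε hC hA hfin
  exact ⟨Φ ∘ f, hf.isometry_comp Φ.isometry⟩

theorem lp_sum_of_nested_finite_dimensional_finite_determination
    (p : ℝ≥0∞) [Fact (1 ≤ p)] (hp : p ≠ ∞)
    (X : ℕ → Type*) [∀ n, NormedAddCommGroup (X n)] [∀ n, NormedSpace ℝ (X n)]
    [∀ n, FiniteDimensional ℝ (X n)]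
    (hnested : ∀ n, ∃ J : X n →ₗᵢ[ℝ] X (n + 1), ¬ Function.Surjective J)
    (ε C : ℝ) (hε : 0 < ε) (hC : 1 ≤ C)
    (A : Type*) [MetricSpace A] (hA : MetricLocallyFinite A)
    (hfin : ∀ S : Set A, S.Finite → ∃ f : S → lp X p, IsBilipschitzEmbedding C f) :
    ∃ f : A → lp X p, IsBilipschitzEmbedding ((1 + ε) * C) f :=
  lp_sum_of_nested_finite_dimensional_finite_determination_general p X
    (fun n => (hnested n).nonempty) ε C hε (zero_le_one.trans hC) A hA hfin
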